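/- Suppose 0 ≤ V₀ ≤ C with V₀(x) → C as |x| → ∞ and 0 < C < ∞. Then for each j ∈ ℕ, inf_{k ∈ ℝ} (ω_{j+1}(k) - ω_j(k)) > 0, i.e. consecutive dispersion curves of h₀(k) are uniformly separated. -/

import Mathlib

open MeasureTheory Filter

/-- `ω` is an eigenvalue of the fibered operator `h₀(k) = p_x² + (Bx-k)² + V₀(x)`. -/
def IsEigenvalue (B : ℝ) (V₀ : ℝ → ℝ) (k ω : ℝ) : Prop :=
  ∃ φ : ℝ → ℝ, ContDiff ℝ 2 φ ∧ φ ≠ 0 ∧ Integrable (fun x => (φ x) ^ 2) ∧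
    ∀ x, -(deriv (deriv φ) x) + ((B * x - k) ^ 2 + V₀ x) * φ x = ω * φ x

/-!
Recentering `x ↦ x + k / B` turns the eigenvalue equation of `h₀(k)` into `φ'' = Q φ`, where
`Q = (B x)² + V₀(x + k / B) - E` is confining with constants depending only on a bound for the
energy `E`. Two such bound states `p`, `q` with potentials `Q` and `Q + δ` satisfy
`∫ p q = 0`, since `δ p q` is the derivative of their Wronskian `W`. For small `δ` this is
impossible: `W = O(δ)`, so the phase space vectors `(p, p')` and `(q, q')` stay nearly parallel;
hence `p q` has a fixed sign in both tails and is at least `-|W|`, up to that sign, in between.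
Energies below a fixed bound are therefore uniformly separated.

It remains to bound a continuous branch of eigenvalues from above. The number of zeros of its
eigenfunctions is finite and locally constant in `k`, whereas Sturm comparison produces
arbitrarily many zeros at high energies.
-/

section RealFunctions

variable {f f' : ℝ → ℝ}

lemma mul_sub_le_image_sub_of_le_hasDerivAt {a b c : ℝ} (hab : a ≤ b)
    (hf : ∀ x ∈ Set.Icc a b, HasDerivAt f (f' x) x) (hc : ∀ x ∈ Set.Icc a b, c ≤ f' x) :
    c * (b - a) ≤ f b - f a := by
  refine (convex_Icc a b).mul_sub_le_image_sub_of_le_deriv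
    (fun x hx => (hf x hx).continuousAt.continuousWithinAt)
    (fun x hx => (hf x (interior_subset hx)).differentiableAt.differentiableWithinAt)
    (fun x hx => ?_) a (Set.left_mem_Icc.2 hab) b (Set.right_mem_Icc.2 hab) hab
  rw [(hf x (interior_subset hx)).deriv]
  exact hc x (interior_subset hx)

lemma le_of_hasDerivAt_nonneg {a b : ℝ} (hab : a ≤ b)
    (hf : ∀ x ∈ Set.Icc a b, HasDerivAt f (f' x) x) (h0 : ∀ x ∈ Set.Icc a b, 0 ≤ f' x) :
    f a ≤ f b := by
  linarith [mul_sub_le_image_sub_of_le_hasDerivAt hab hf h0]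

lemma le_of_hasDerivAt_nonpos {a b : ℝ} (hab : a ≤ b)
    (hf : ∀ x ∈ Set.Icc a b, HasDerivAt f (f' x) x) (h0 : ∀ x ∈ Set.Icc a b, f' x ≤ 0) :
    f b ≤ f a :=
  neg_le_neg_iff.1 (le_of_hasDerivAt_nonneg (f := fun x => -f x) hab (fun x hx => (hf x hx).neg)
    fun x hx => neg_nonneg.2 (h0 x hx))

lemma nonpos_of_hasDerivAt_nonneg_of_tendsto_zero {a : ℝ}
    (hf : ∀ x ≥ a, HasDerivAt f (f' x) x) (h0 : ∀ x ≥ a, 0 ≤ f' x)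
    (hlim : Tendsto f atTop (nhds 0)) : f a ≤ 0 := by
  refine ge_of_tendsto hlim ?_
  filter_upwards [eventually_ge_atTop a] with b hb
  exact le_of_hasDerivAt_nonneg hb (fun x hx => hf x hx.1) fun x hx => h0 x hx.1

lemma abs_le_of_abs_deriv_le_of_tendsto_zero {g g' : ℝ → ℝ} {a : ℝ}
    (hf : ∀ x ≥ a, HasDerivAt f (f' x) x) (hg : ∀ x ≥ a, HasDerivAt g (g' x) x)
    (hle : ∀ x ≥ a, |f' x| ≤ -g' x)
    (hflim : Tendsto f atTop (nhds 0)) (hglim : Tendsto g atTop (nhds 0)) : |f a| ≤ g a := by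
  have hupper : f a - g a ≤ 0 := nonpos_of_hasDerivAt_nonneg_of_tendsto_zero
    (f := fun x => f x - g x) (fun x hx => (hf x hx).sub (hg x hx))
    (fun x hx => by linarith [neg_abs_le (f' x), hle x hx]) (by simpa using hflim.sub hglim)
  have hlower : -f a - g a ≤ 0 := nonpos_of_hasDerivAt_nonneg_of_tendsto_zero
    (f := fun x => -f x - g x) (fun x hx => (hf x hx).neg.sub (hg x hx))
    (fun x hx => by linarith [le_abs_self (f' x), hle x hx]) (by simpa using hflim.neg.sub hglim)
  exact abs_le.2 ⟨by linarith, by linarith⟩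

lemma abs_le_abs_mul_exp_of_abs_deriv_le {K a b : ℝ}
    (hf : ∀ x ∈ Set.uIcc a b, HasDerivAt f (f' x) x)
    (hbound : ∀ x ∈ Set.uIcc a b, |f' x| ≤ K * |f x|) :
    |f b| ≤ |f a| * Real.exp (K * |b - a|) := by
  have forward {f f' : ℝ → ℝ} {a b : ℝ} (hab : a ≤ b)
      (hf : ∀ x ∈ Set.Icc a b, HasDerivAt f (f' x) x)
      (hbound : ∀ x ∈ Set.Icc a b, |f' x| ≤ K * |f x|) :
      |f b| ≤ |f a| * Real.exp (K * (b - a)) := by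
    rw [← gronwallBound_ε0]
    exact norm_le_gronwallBound_of_norm_deriv_right_le
      (fun x hx => (hf x hx).continuousAt.continuousWithinAt)
      (fun x hx => (hf x (Set.Ico_subset_Icc_self hx)).hasDerivWithinAt) le_rfl
      (fun x hx => by simpa using hbound x (Set.Ico_subset_Icc_self hx)) b
      (Set.right_mem_Icc.2 hab)
  rcases le_total a b with hab | hba
  · rw [Set.uIcc_of_le hab] at hf hbound
    rw [abs_of_nonneg (sub_nonneg.2 hab)]
    exact forward hab hf hbound
  · have hmem : ∀ x ∈ Set.Icc (-a) (-b), -x ∈ Set.uIcc a b := fun x hx =>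
      Set.mem_uIcc_of_ge (by linarith [hx.2]) (by linarith [hx.1])
    have hreflect := forward (f := fun x => f (-x)) (f' := fun x => -f' (-x)) (neg_le_neg hba)
      (fun x hx => ((hf (-x) (hmem x hx)).comp x (hasDerivAt_neg x)).congr_deriv (by ring))
      (fun x hx => by simpa using hbound (-x) (hmem x hx))
    rw [abs_of_nonpos (sub_nonpos.2 hba)]
    simpa [neg_add_eq_sub] using hreflect

lemma exists_eq_zero_of_le_deriv {z r m : ℝ} (hr : 0 < r)
    (hf : ∀ x ∈ Set.Icc (z - r) (z + r), HasDerivAt f (f' x) x)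
    (hm : ∀ x ∈ Set.Icc (z - r) (z + r), m ≤ f' x) (hz : |f z| < m * r) :
    ∃ y ∈ Set.Ioo (z - r) (z + r), f y = 0 := by
  have hright : m * (z + r - z) ≤ f (z + r) - f z :=
    mul_sub_le_image_sub_of_le_hasDerivAt (by linarith)
      (fun x hx => hf x ⟨by linarith [hx.1], hx.2⟩) fun x hx => hm x ⟨by linarith [hx.1], hx.2⟩
  have hleft : m * (z - (z - r)) ≤ f z - f (z - r) :=
    mul_sub_le_image_sub_of_le_hasDerivAt (by linarith)
      (fun x hx => hf x ⟨hx.1, by linarith [hx.2]⟩) fun x hx => hm x ⟨hx.1, by linarith [hx.2]⟩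
  obtain ⟨hz₁, hz₂⟩ := abs_lt.1 hz
  exact intermediate_value_Ioo (by linarith)
    (fun x hx => (hf x hx).continuousAt.continuousWithinAt) ⟨by linarith, by linarith⟩

lemma forall_pos_of_forall_ne_zero {X : Type*} [TopologicalSpace X] {g : X → ℝ} {s : Set X}
    (hs : IsPreconnected s) (hg : ContinuousOn g s) (hne : ∀ x ∈ s, g x ≠ 0) {a : X} (ha : a ∈ s)
    (hpos : 0 < g a) : ∀ x ∈ s, 0 < g x := by
  intro x hx
  by_contra! hle
  obtain ⟨y, hy, hy0⟩ := hs.intermediate_value hx ha hg ⟨hle, hpos.le⟩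
  exact hne y hy hy0

lemma finite_zeros_of_subset_isCompact {K : Set ℝ} (hK : IsCompact K)
    (hf : ∀ x, HasDerivAt f (f' x) x) (hsub : f ⁻¹' {0} ⊆ K)
    (hsimple : ∀ x, f x = 0 → f' x ≠ 0) : (f ⁻¹' {0}).Finite := by
  by_contra hinf
  obtain ⟨x, -, hx⟩ := Set.Infinite.exists_accPt_of_subset_isCompact hinf hK hsub
  have hcont : Continuous f := continuous_iff_continuousAt.2 fun y => (hf y).continuousAt
  have hfx : f x = 0 :=
    isClosed_iff_clusterPt.1 (isClosed_singleton.preimage hcont) x hx.clusterPt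
  have hfreq : ∃ᶠ y in nhdsWithin x {x}ᶜ, f y = 0 := accPt_iff_frequently_nhdsNE.1 hx
  exact hfreq ((hf x).eventually_ne (hsimple x hfx))

lemma not_integrable_of_forall_ge_le {a c : ℝ} (hc : 0 < c) (h : ∀ x ≥ a, c ≤ f x) :
    ¬ Integrable f := by
  intro hf
  have hsub : Set.Ici a ⊆ {x | c ≤ ‖f x‖} := fun x hx => (h x hx).trans (Real.le_norm_self _)
  refine (measure_mono (μ := volume) hsub).not_gt ?_
  rw [Real.volume_Ici]
  exact hf.measure_norm_ge_lt_top hc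

end RealFunctions

section Solutions

variable {Q Q₁ Q₂ p p' q q' : ℝ → ℝ}

/-- `p` solves the one-dimensional Schrödinger equation `p'' = Q p`. The derivative `p'` is carried
along so that the equation is a first order system for `(p, p')`. -/
structure IsSolution (Q p p' : ℝ → ℝ) : Prop where
  hasDerivAt : ∀ x, HasDerivAt p (p' x) x
  hasDerivAt_deriv : ∀ x, HasDerivAt p' (Q x * p x) x

namespace IsSolution

lemma const_mul (h : IsSolution Q p p') (c : ℝ) :
    IsSolution Q (fun x => c * p x) (fun x => c * p' x) :=
  ⟨fun x => (h.hasDerivAt x).const_mul c,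
    fun x => ((h.hasDerivAt_deriv x).const_mul c).congr_deriv (by ring)⟩

lemma comp_neg (h : IsSolution Q p p') :
    IsSolution (fun x => Q (-x)) (fun x => p (-x)) (fun x => -p' (-x)) :=
  ⟨fun x => ((h.hasDerivAt (-x)).comp x (hasDerivAt_neg x)).congr_deriv (by ring),
    fun x => ((h.hasDerivAt_deriv (-x)).comp x (hasDerivAt_neg x)).neg.congr_deriv (by ring)⟩

lemma continuous (h : IsSolution Q p p') : Continuous p :=
  continuous_iff_continuousAt.2 fun x => (h.hasDerivAt x).continuousAt

lemma continuous_deriv (h : IsSolution Q p p') : Continuous p' :=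
  continuous_iff_continuousAt.2 fun x => (h.hasDerivAt_deriv x).continuousAt

lemma hasDerivAt_mul_deriv (h : IsSolution Q p p') (x : ℝ) :
    HasDerivAt (fun x => p x * p' x) (p' x ^ 2 + Q x * p x ^ 2) x :=
  ((h.hasDerivAt x).mul (h.hasDerivAt_deriv x)).congr_deriv (by ring)

lemma hasDerivAt_sq (h : IsSolution Q p p') (x : ℝ) :
    HasDerivAt (fun x => p x ^ 2) (2 * (p x * p' x)) x :=
  ((h.hasDerivAt x).pow 2).congr_deriv (by push_cast; ring)

lemma hasDerivAt_deriv_sq (h : IsSolution Q p p') (x : ℝ) :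
    HasDerivAt (fun x => p' x ^ 2) (2 * Q x * (p x * p' x)) x :=
  ((h.hasDerivAt_deriv x).pow 2).congr_deriv (by push_cast; ring)

lemma sq_add_sq_le (h : IsSolution Q p p') {Λ a b : ℝ} (hQ : ∀ x ∈ Set.uIcc a b, |Q x| ≤ Λ) :
    p b ^ 2 + p' b ^ 2 ≤ (p a ^ 2 + p' a ^ 2) * Real.exp ((1 + Λ) * |b - a|) := by
  have hnonneg (x : ℝ) : |p x ^ 2 + p' x ^ 2| = p x ^ 2 + p' x ^ 2 := abs_of_nonneg (by positivity)
  have hderiv (x : ℝ) : HasDerivAt (fun x => p x ^ 2 + p' x ^ 2)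
      ((1 + Q x) * (2 * (p x * p' x))) x :=
    ((h.hasDerivAt_sq x).add (h.hasDerivAt_deriv_sq x)).congr_deriv (by ring)
  have hgrowth := abs_le_abs_mul_exp_of_abs_deriv_le (K := 1 + Λ) (a := a) (b := b)
    (fun x _ => hderiv x) fun x hx => by
      rw [abs_mul, hnonneg]
      have hcoeff : |1 + Q x| ≤ 1 + Λ := (abs_add_le _ _).trans (by simpa using hQ x hx)
      have hprod : |2 * (p x * p' x)| ≤ p x ^ 2 + p' x ^ 2 := by
        rw [← mul_assoc]
        exact abs_le.2 ⟨by nlinarith [sq_nonneg (p x + p' x)], two_mul_le_add_sq _ _⟩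
      exact mul_le_mul hcoeff hprod (abs_nonneg _) ((abs_nonneg _).trans hcoeff)
  rwa [hnonneg, hnonneg] at hgrowth

end IsSolution

/-- The Wronskian `p q' - p' q` of two functions `p`, `q` with derivatives `p'`, `q'`. -/
def wronskian (p p' q q' : ℝ → ℝ) (x : ℝ) : ℝ := p x * q' x - p' x * q x

/-- The Euclidean inner product of the phase space vectors `(p, p')` and `(q, q')`. -/
def phaseInner (p p' q q' : ℝ → ℝ) (x : ℝ) : ℝ := p x * q x + p' x * q' x

lemma IsSolution.hasDerivAt_wronskian (hp : IsSolution Q₁ p p') (hq : IsSolution Q₂ q q') (x : ℝ) :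
    HasDerivAt (wronskian p p' q q') ((Q₂ x - Q₁ x) * (p x * q x)) x :=
  (((hp.hasDerivAt x).mul (hq.hasDerivAt_deriv x)).sub
    ((hp.hasDerivAt_deriv x).mul (hq.hasDerivAt x))).congr_deriv (by ring)

lemma phaseInner_sq_add_wronskian_sq (x : ℝ) :
    phaseInner p p' q q' x ^ 2 + wronskian p p' q q' x ^ 2 =
      (p x ^ 2 + p' x ^ 2) * (q x ^ 2 + q' x ^ 2) := by
  simp only [phaseInner, wronskian]
  ring

lemma neg_abs_wronskian_le_mul {x : ℝ} (h : 0 < phaseInner p p' q q' x) :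
    -|wronskian p p' q q' x| ≤ p x * q x := by
  simp only [phaseInner, wronskian] at *
  by_contra! hlt
  -- If `|W| < -pq < p'q'`, then `W² < -(pq)(p'q')`, whereas `W² = (pq' + p'q)² - 4(pq)(p'q')`.
  have hsq : (p x * q' x - p' x * q x) ^ 2 < -(p x * q x) * (p' x * q' x) := by
    rw [← sq_abs, sq]
    exact mul_lt_mul'' (by linarith) (by linarith) (abs_nonneg _) (abs_nonneg _)
  nlinarith [sq_nonneg (p x * q' x + p' x * q x), sq_nonneg (p x * q' x - p' x * q x)]

end Solutions

section Oscillation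

variable {Q p p' : ℝ → ℝ}

lemma IsSolution.exists_nonpos_of_le {a b : ℝ} (h : IsSolution Q p p') (hab : a < b)
    (hQ : ∀ x ∈ Set.Icc a b, Q x ≤ -(Real.pi / (b - a)) ^ 2) : ∃ x ∈ Set.Icc a b, p x ≤ 0 := by
  by_contra! hp
  set m := Real.pi / (b - a)
  have hend : m * (b - a) = Real.pi := div_mul_cancel₀ _ (sub_pos.2 hab).ne'
  have hmpos : 0 < m := div_pos Real.pi_pos (sub_pos.2 hab)
  -- `s x = sin (m (x - a))` solves the comparison equation `s'' = -m² s` and vanishes at `a`, `b`.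
  have hsin : IsSolution (fun _ => -m ^ 2) (fun x => Real.sin (m * (x - a)))
      (fun x => m * Real.cos (m * (x - a))) := by
    have hlin (x : ℝ) : HasDerivAt (fun x => m * (x - a)) m x := by
      simpa using ((hasDerivAt_id x).sub_const a).const_mul m
    exact ⟨fun x => (hlin x).sin.congr_deriv (by ring),
      fun x => ((hlin x).cos.const_mul m).congr_deriv (by ring)⟩
  have hmono := le_of_hasDerivAt_nonpos hab.le (fun x _ => hsin.hasDerivAt_wronskian h x)
    fun x hx => by
      have hs : 0 ≤ Real.sin (m * (x - a)) := Real.sin_nonneg_of_nonneg_of_le_pi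
        (mul_nonneg hmpos.le (sub_nonneg.2 hx.1))
        (hend ▸ mul_le_mul_of_nonneg_left (by linarith [hx.2]) hmpos.le)
      exact mul_nonpos_of_nonpos_of_nonneg (by linarith [hQ x hx]) (mul_nonneg hs (hp x hx).le)
  simp only [wronskian, hend, sub_self, mul_zero, Real.sin_pi, Real.sin_zero, Real.cos_pi,
    Real.cos_zero] at hmono
  nlinarith [mul_pos hmpos (hp a (Set.left_mem_Icc.2 hab.le)),
    mul_pos hmpos (hp b (Set.right_mem_Icc.2 hab.le))]

lemma IsSolution.exists_eq_zero_of_le {a b : ℝ} (h : IsSolution Q p p') (hab : a < b)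
    (hQ : ∀ x ∈ Set.Icc a b, Q x ≤ -(Real.pi / (b - a)) ^ 2) : ∃ x ∈ Set.Icc a b, p x = 0 := by
  obtain ⟨x, hx, hpx⟩ := h.exists_nonpos_of_le hab hQ
  obtain ⟨y, hy, hpy⟩ := (h.const_mul (-1)).exists_nonpos_of_le hab hQ
  exact isPreconnected_Icc.intermediate_value hx hy h.continuous.continuousOn ⟨hpx, by linarith⟩

end Oscillation

section SquareIntegrable

variable {Q p p' : ℝ → ℝ}

/-- A solution of `p'' = Q p` that is square integrable over `ℝ`. -/
structure IsL2Solution (Q p p' : ℝ → ℝ) : Prop extends IsSolution Q p p' where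
  integrable_sq : Integrable (fun x => p x ^ 2)

namespace IsL2Solution

lemma const_mul (h : IsL2Solution Q p p') (c : ℝ) :
    IsL2Solution Q (fun x => c * p x) (fun x => c * p' x) :=
  ⟨h.toIsSolution.const_mul c, by simpa only [mul_pow] using h.integrable_sq.const_mul (c ^ 2)⟩

lemma comp_neg (h : IsL2Solution Q p p') :
    IsL2Solution (fun x => Q (-x)) (fun x => p (-x)) (fun x => -p' (-x)) :=
  ⟨h.toIsSolution.comp_neg, h.integrable_sq.comp_neg⟩

variable {a : ℝ}

lemma mul_deriv_nonpos (h : IsL2Solution Q p p') (hQ : ∀ x ≥ a, 0 ≤ Q x) : p a * p' a ≤ 0 := by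
  by_contra! hpos
  have hmul : ∀ x ≥ a, p a * p' a ≤ p x * p' x := fun x hx =>
    le_of_hasDerivAt_nonneg hx (fun y _ => h.hasDerivAt_mul_deriv y) fun y hy =>
      add_nonneg (sq_nonneg _) (mul_nonneg (hQ y hy.1) (sq_nonneg _))
  have hsq : ∀ x ≥ a, p a ^ 2 ≤ p x ^ 2 := fun x hx =>
    le_of_hasDerivAt_nonneg hx (fun y _ => h.hasDerivAt_sq y) fun y hy => by
      linarith [hmul y hy.1]
  have hne : p a ≠ 0 := left_ne_zero_of_mul hpos.ne'
  exact not_integrable_of_forall_ge_le (by positivity) hsq h.integrable_sq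

lemma sq_add_mul_deriv_nonpos (h : IsL2Solution Q p p') (hQ : ∀ x ≥ a, 1 ≤ Q x) :
    p a ^ 2 + p a * p' a ≤ 0 := by
  by_contra! hpos
  refine not_integrable_of_forall_ge_le (a := a) hpos (fun x hx => ?_) h.integrable_sq
  have hmono : p a ^ 2 + p a * p' a ≤ p x ^ 2 + p x * p' x :=
    le_of_hasDerivAt_nonneg hx
      (fun y _ => (h.hasDerivAt_sq y).add (h.hasDerivAt_mul_deriv y)) fun y hy => by
        nlinarith [hQ y hy.1, sq_nonneg (p y + p' y), sq_nonneg (p y)]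
  linarith [h.mul_deriv_nonpos fun y hy => zero_le_one.trans (hQ y (hx.trans hy))]

lemma abs_le_mul_exp (h : IsL2Solution Q p p') (hQ : ∀ x ≥ a, 1 ≤ Q x) {x : ℝ} (hx : a ≤ x) :
    |p x| ≤ |p a| * Real.exp (a - x) := by
  have hexp (y : ℝ) : HasDerivAt (fun y => Real.exp (2 * y)) (Real.exp (2 * y) * 2) y := by
    simpa using ((hasDerivAt_id y).const_mul 2).exp
  have hmono : p x ^ 2 * Real.exp (2 * x) ≤ p a ^ 2 * Real.exp (2 * a) :=
    le_of_hasDerivAt_nonpos hx (fun y _ => (h.hasDerivAt_sq y).mul (hexp y)) fun y hy => by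
      have hpp' := h.sq_add_mul_deriv_nonpos fun z hz => hQ z (hy.1.trans hz)
      nlinarith [Real.exp_pos (2 * y)]
  have hexp_sq (y : ℝ) : Real.exp (2 * y) = Real.exp y ^ 2 := by rw [← Real.exp_nat_mul]; norm_num
  have habs : |p x| * Real.exp x ≤ |p a| * Real.exp a := by
    refine abs_le_of_sq_le_sq' ?_ (by positivity) |>.2
    rw [mul_pow, mul_pow, sq_abs, sq_abs, ← hexp_sq, ← hexp_sq]
    linarith
  rwa [Real.exp_sub, ← mul_div_assoc, le_div_iff₀ (Real.exp_pos x)]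

lemma abs_deriv_le (h : IsL2Solution Q p p') (hQ : ∀ x ≥ a, 0 ≤ Q x) {x : ℝ} (hx : a ≤ x) :
    |p' x| ≤ |p' a| := by
  have hmono : p' x ^ 2 ≤ p' a ^ 2 :=
    le_of_hasDerivAt_nonpos hx (fun y _ => h.hasDerivAt_deriv_sq y) fun y hy => by
      nlinarith [hQ y hy.1, h.mul_deriv_nonpos fun z hz => hQ z (hy.1.trans hz)]
  exact sq_le_sq.1 hmono

lemma eq_zero_of_one_le (h : IsL2Solution Q p p') (hQ : ∀ x, 1 ≤ Q x) : p = 0 := by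
  funext x
  have hright := h.sq_add_mul_deriv_nonpos (a := x) fun y _ => hQ y
  have hleft := h.comp_neg.sq_add_mul_deriv_nonpos (a := -x) fun y _ => hQ (-y)
  simp only [neg_neg, mul_neg] at hleft
  exact pow_eq_zero_iff two_ne_zero |>.1 (le_antisymm (by linarith) (sq_nonneg (p x)))

end IsL2Solution

end SquareIntegrable

section BoundStates

variable {R : ℝ} {Λ Q p p' : ℝ → ℝ}

/-- `Q` is a confining potential with uniform constants: it is at least `1` outside of `(-R, R)`
and bounded by `Λ L` on `[-L, L]`. -/
structure IsConfining (R : ℝ) (Λ Q : ℝ → ℝ) : Prop where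
  radius_pos : 0 < R
  abs_potential_le : ∀ L x, |x| ≤ L → |Q x| ≤ Λ L
  one_le_potential : ∀ x, R ≤ |x| → 1 ≤ Q x

namespace IsConfining

lemma comp_neg (h : IsConfining R Λ Q) : IsConfining R Λ (fun x => Q (-x)) :=
  ⟨h.radius_pos, fun L x hx => h.abs_potential_le L (-x) (by rwa [abs_neg]),
    fun x hx => h.one_le_potential (-x) (by rwa [abs_neg])⟩

lemma bound_nonneg (h : IsConfining R Λ Q) {L : ℝ} (hL : 0 ≤ L) : 0 ≤ Λ L :=
  (abs_nonneg _).trans (h.abs_potential_le L 0 (by rwa [abs_zero]))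

lemma abs_potential_le_of_mem_uIcc (h : IsConfining R Λ Q) {a b L : ℝ} (ha : |a| ≤ L)
    (hb : |b| ≤ L) : ∀ x ∈ Set.uIcc a b, |Q x| ≤ Λ L := fun x hx =>
  h.abs_potential_le L x (abs_le.2 (Set.uIcc_subset_Icc (abs_le.1 ha) (abs_le.1 hb) hx))

end IsConfining

/-- A bound state of a confining potential: an `L²` solution whose initial data `(p 0, p' 0)` is a
unit vector of the phase space. -/
structure IsBoundState (R : ℝ) (Λ Q p p' : ℝ → ℝ) : Prop
    extends IsL2Solution Q p p', IsConfining R Λ Q where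
  normalized : p 0 ^ 2 + p' 0 ^ 2 = 1

/-- The constant that controls all bound states of potentials confined by `R` and `Λ`: the phase
space norm varies at most by the factor `exp ((1 + Λ (R + 2)) * (R + 2) / 2)` on `[-(R+2), R+2]`,
and the remaining factor `exp R` absorbs the start of the exponential decay at `R`. -/
noncomputable def phaseBound (R : ℝ) (Λ : ℝ → ℝ) : ℝ :=
  Real.exp ((1 + Λ (R + 2)) * (R + 2) / 2 + R)

lemma phaseBound_pos (R : ℝ) (Λ : ℝ → ℝ) : 0 < phaseBound R Λ := Real.exp_pos _

lemma phaseBound_mul_exp_neg_sq (R : ℝ) (Λ : ℝ → ℝ) :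
    (phaseBound R Λ * Real.exp (-R)) ^ 2 = Real.exp ((1 + Λ (R + 2)) * (R + 2)) := by
  rw [phaseBound, ← Real.exp_add, ← Real.exp_nat_mul]
  congr 1
  push_cast
  ring

namespace IsBoundState

lemma neg (h : IsBoundState R Λ Q p p') :
    IsBoundState R Λ Q (fun x => -p x) (fun x => -p' x) where
  toIsL2Solution := by simpa using h.toIsL2Solution.const_mul (-1)
  toIsConfining := h.toIsConfining
  normalized := by simpa using h.normalized

lemma comp_neg (h : IsBoundState R Λ Q p p') :
    IsBoundState R Λ (fun x => Q (-x)) (fun x => p (-x)) (fun x => -p' (-x)) where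
  toIsL2Solution := h.toIsL2Solution.comp_neg
  toIsConfining := h.toIsConfining.comp_neg
  normalized := by simpa using h.normalized

lemma one_le_potential_of_le (h : IsBoundState R Λ Q p p') {a : ℝ} (ha : R ≤ a) :
    ∀ x ≥ a, 1 ≤ Q x :=
  fun x hx => h.one_le_potential x ((ha.trans hx).trans (le_abs_self x))

lemma sq_add_sq_le (h : IsBoundState R Λ Q p p') {x : ℝ} (hx : |x| ≤ R + 2) :
    p x ^ 2 + p' x ^ 2 ≤ (phaseBound R Λ * Real.exp (-R)) ^ 2 := by
  have hR := h.radius_pos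
  have hL : 0 ≤ R + 2 := by positivity
  have hgrowth := h.toIsSolution.sq_add_sq_le (a := 0) (b := x)
    (h.abs_potential_le_of_mem_uIcc (by rwa [abs_zero]) hx)
  rw [h.normalized, one_mul, sub_zero] at hgrowth
  rw [phaseBound_mul_exp_neg_sq]
  have := h.bound_nonneg hL
  exact hgrowth.trans (by gcongr)

lemma inv_sq_le_sq_add_sq (h : IsBoundState R Λ Q p p') {x : ℝ} (hx : |x| ≤ R + 2) :
    (phaseBound R Λ)⁻¹ ^ 2 ≤ p x ^ 2 + p' x ^ 2 := by
  have hR := h.radius_pos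
  have hL : 0 ≤ R + 2 := by positivity
  have hΛ := h.bound_nonneg hL
  have hgrowth := h.toIsSolution.sq_add_sq_le (a := x) (b := 0)
    (h.abs_potential_le_of_mem_uIcc hx (by rwa [abs_zero]))
  rw [h.normalized, zero_sub, abs_neg] at hgrowth
  rw [inv_pow, inv_le_iff_one_le_mul₀ (pow_pos (phaseBound_pos R Λ) 2)]
  refine hgrowth.trans (mul_le_mul_of_nonneg_left ?_ (by positivity))
  rw [phaseBound, ← Real.exp_nat_mul, Real.exp_le_exp]
  push_cast
  nlinarith [mul_le_mul_of_nonneg_left hx (by positivity : 0 ≤ 1 + Λ (R + 2))]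

lemma deriv_ne_zero (h : IsBoundState R Λ Q p p') {x : ℝ} (hx : p x = 0) : p' x ≠ 0 := by
  intro hx'
  have hgrowth := h.toIsSolution.sq_add_sq_le (a := x) (b := 0)
    (h.abs_potential_le_of_mem_uIcc le_rfl (by simp))
  rw [h.normalized, hx, hx'] at hgrowth
  norm_num at hgrowth

lemma abs_le_of_abs_le (h : IsBoundState R Λ Q p p') {x : ℝ} (hx : |x| ≤ R + 2) :
    |p x| ≤ phaseBound R Λ * Real.exp (-R) :=
  abs_le_of_sq_le_sq (by nlinarith [h.sq_add_sq_le hx])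
    (mul_pos (phaseBound_pos R Λ) (Real.exp_pos _)).le

lemma abs_le_mul_exp (h : IsBoundState R Λ Q p p') (x : ℝ) :
    |p x| ≤ phaseBound R Λ * Real.exp (-|x|) := by
  wlog hx : 0 ≤ x generalizing Q p p' x
  · simpa using this h.comp_neg (-x) (by linarith)
  have hR := h.radius_pos
  rw [abs_of_nonneg hx]
  rcases le_total x R with hxR | hRx
  · refine (h.abs_le_of_abs_le (by rw [abs_of_nonneg hx]; linarith)).trans ?_
    have := phaseBound_pos R Λ
    gcongr
  · calc |p x| ≤ |p R| * Real.exp (R - x) :=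
          h.toIsL2Solution.abs_le_mul_exp (h.one_le_potential_of_le le_rfl) hRx
      _ ≤ phaseBound R Λ * Real.exp (-R) * Real.exp (R - x) := by
          gcongr
          exact h.abs_le_of_abs_le (by rw [abs_of_pos hR]; linarith)
      _ = phaseBound R Λ * Real.exp (-x) := by
          rw [mul_assoc, ← Real.exp_add]
          ring_nf

lemma abs_le_phaseBound (h : IsBoundState R Λ Q p p') (x : ℝ) : |p x| ≤ phaseBound R Λ :=
  (h.abs_le_mul_exp x).trans
    (mul_le_of_le_one_right (phaseBound_pos R Λ).le (Real.exp_le_one_iff.2 (by simp)))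

lemma abs_deriv_le_phaseBound (h : IsBoundState R Λ Q p p') (x : ℝ) :
    |p' x| ≤ phaseBound R Λ := by
  wlog hx : 0 ≤ x generalizing Q p p' x
  · simpa using this h.comp_neg (-x) (by linarith)
  have hR := h.radius_pos
  have hinner {y : ℝ} (hy : 0 ≤ y) (hyR : y ≤ R) : |p' y| ≤ phaseBound R Λ := by
    have hexp : phaseBound R Λ * Real.exp (-R) ≤ phaseBound R Λ :=
      mul_le_of_le_one_right (phaseBound_pos R Λ).le (Real.exp_le_one_iff.2 (by linarith))
    refine (abs_le_of_sq_le_sq ?_ ?_).trans hexp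
    · nlinarith [h.sq_add_sq_le (x := y) (by rw [abs_of_nonneg hy]; linarith)]
    · exact (mul_pos (phaseBound_pos R Λ) (Real.exp_pos _)).le
  rcases le_total x R with hxR | hRx
  · exact hinner hx hxR
  · have hQ : ∀ y ≥ R, 0 ≤ Q y := fun y hy =>
      zero_le_one.trans (h.one_le_potential_of_le le_rfl y hy)
    exact (h.toIsL2Solution.abs_deriv_le hQ hRx).trans (hinner hR.le le_rfl)

lemma inv_le_abs (h : IsBoundState R Λ Q p p') {x : ℝ} (hx : x ∈ Set.Icc R (R + 1)) :
    (4 * phaseBound R Λ)⁻¹ ≤ |p x| := by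
  have hR := h.radius_pos
  have hdecay : ∀ y ≥ x, |p y| ≤ |p x| := fun y hy =>
    (h.toIsL2Solution.abs_le_mul_exp (h.one_le_potential_of_le hx.1) hy).trans
      (mul_le_of_le_one_right (abs_nonneg _) (Real.exp_le_one_iff.2 (by linarith)))
  obtain ⟨z, hz, hslope⟩ := exists_hasDerivAt_eq_slope p p' (lt_add_one x)
    h.continuous.continuousOn fun y _ => h.hasDerivAt y
  have hderiv : |p' z| ≤ 2 * |p x| := by
    rw [hslope, add_sub_cancel_left, div_one]
    linarith [abs_sub (p (x + 1)) (p x), hdecay (x + 1) (by linarith)]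
  have hphase := h.inv_sq_le_sq_add_sq (x := z)
    (abs_le.2 ⟨by linarith [hx.1, hz.1], by linarith [hx.2, hz.2]⟩)
  rw [← sq_abs (p z), ← sq_abs (p' z)] at hphase
  rw [mul_inv]
  by_contra! hsmall
  nlinarith [hdecay z hz.1.le, abs_nonneg (p z), abs_nonneg (p' z), abs_nonneg (p x)]

lemma abs_lt_of_eq_zero (h : IsBoundState R Λ Q p p') {x : ℝ} (hx : p x = 0) : |x| < R := by
  wlog hpos : 0 ≤ x generalizing Q p p' x
  · simpa using this h.comp_neg (x := -x) (by simpa using hx) (by linarith)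
  rw [abs_of_nonneg hpos]
  by_contra! hRx
  have hzero : ∀ y ≥ x, p y = 0 := fun y hy => by
    simpa [hx] using h.toIsL2Solution.abs_le_mul_exp (h.one_le_potential_of_le hRx) hy
  obtain ⟨z, hz, hz'⟩ := exists_hasDerivAt_eq_zero (lt_add_one x) h.continuous.continuousOn
    (hx.trans (hzero (x + 1) (by linarith)).symm) fun y _ => h.hasDerivAt y
  exact h.deriv_ne_zero (hzero z hz.1.le) hz'

end IsBoundState

end BoundStates

section Wronskian

variable {R : ℝ} {Λ Q₁ Q₂ p p' q q' : ℝ → ℝ}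

lemma wronskian_comp_neg (x : ℝ) :
    wronskian (fun x => p (-x)) (fun x => -p' (-x)) (fun x => q (-x)) (fun x => -q' (-x)) x =
      -wronskian p p' q q' (-x) := by
  simp only [wronskian]
  ring

namespace IsBoundState

lemma tendsto_wronskian (hp : IsBoundState R Λ Q₁ p p') (hq : IsBoundState R Λ Q₂ q q') :
    Tendsto (wronskian p p' q q') atTop (nhds 0) := by
  have hbound : Tendsto (fun x => 2 * phaseBound R Λ ^ 2 * Real.exp (-x)) atTop (nhds 0) := by
    simpa using Real.tendsto_exp_neg_atTop_nhds_zero.const_mul (2 * phaseBound R Λ ^ 2)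
  refine squeeze_zero_norm' ?_ hbound
  filter_upwards [eventually_ge_atTop 0] with x hx
  have hK := phaseBound_pos R Λ
  have hpx := hp.abs_le_mul_exp x
  have hqx := hq.abs_le_mul_exp x
  rw [abs_of_nonneg hx] at hpx hqx
  calc ‖wronskian p p' q q' x‖ ≤ |p x| * |q' x| + |p' x| * |q x| := by
        rw [← abs_mul, ← abs_mul]
        exact abs_sub _ _
    _ ≤ phaseBound R Λ * Real.exp (-x) * phaseBound R Λ +
          phaseBound R Λ * (phaseBound R Λ * Real.exp (-x)) := by
        gcongr
        exacts [hq.abs_deriv_le_phaseBound x, hp.abs_deriv_le_phaseBound x]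
    _ = 2 * phaseBound R Λ ^ 2 * Real.exp (-x) := by ring

lemma abs_wronskian_le (hp : IsBoundState R Λ Q₁ p p') (hq : IsBoundState R Λ Q₂ q q') {ε : ℝ}
    (hε : ∀ x, |Q₂ x - Q₁ x| ≤ ε * (1 + |x|)) (x : ℝ) :
    |wronskian p p' q q' x| ≤ ε * phaseBound R Λ ^ 2 := by
  wlog hx : 0 ≤ x generalizing Q₁ Q₂ p p' q q' x
  · simpa [wronskian_comp_neg] using
      this hp.comp_neg hq.comp_neg (fun y => by simpa using hε (-y)) (-x) (by linarith)
  have hε₀ : 0 ≤ ε := by simpa using (abs_nonneg _).trans (hε 0)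
  have hK := phaseBound_pos R Λ
  have hderiv : ∀ y ≥ x, |(Q₂ y - Q₁ y) * (p y * q y)| ≤
      -(ε * phaseBound R Λ ^ 2 * -Real.exp (-y)) := fun y hy => by
    have hp_le := hp.abs_le_mul_exp y
    have hq_le := hq.abs_le_mul_exp y
    have hQ := hε y
    rw [abs_of_nonneg (hx.trans hy)] at hp_le hq_le hQ
    have hexp : (1 + y) * Real.exp (-y) ≤ 1 := by
      rw [Real.exp_neg, ← div_eq_mul_inv, div_le_one (Real.exp_pos y), add_comm]
      exact Real.add_one_le_exp y
    calc |(Q₂ y - Q₁ y) * (p y * q y)| = |Q₂ y - Q₁ y| * (|p y| * |q y|) := by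
          rw [abs_mul, abs_mul]
      _ ≤ ε * (1 + y) * (phaseBound R Λ * Real.exp (-y) * (phaseBound R Λ * Real.exp (-y))) := by
          gcongr
          exact (abs_nonneg _).trans hQ
      _ = ε * phaseBound R Λ ^ 2 * Real.exp (-y) * ((1 + y) * Real.exp (-y)) := by ring
      _ ≤ ε * phaseBound R Λ ^ 2 * Real.exp (-y) := mul_le_of_le_one_right (by positivity) hexp
      _ = -(ε * phaseBound R Λ ^ 2 * -Real.exp (-y)) := by ring
  have hdecay : |wronskian p p' q q' x| ≤ ε * phaseBound R Λ ^ 2 * Real.exp (-x) :=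
    abs_le_of_abs_deriv_le_of_tendsto_zero
      (fun y _ => hp.hasDerivAt_wronskian hq.toIsSolution y)
      (fun y _ => ((hasDerivAt_neg y).exp.congr_deriv (mul_neg_one _)).const_mul _) hderiv
      (hp.tendsto_wronskian hq) (by simpa using Real.tendsto_exp_neg_atTop_nhds_zero.const_mul _)
  exact hdecay.trans
    (mul_le_of_le_one_right (by positivity) (Real.exp_le_one_iff.2 (by linarith)))

lemma phaseInner_ne_zero (hp : IsBoundState R Λ Q₁ p p') (hq : IsBoundState R Λ Q₂ q q') {x : ℝ}
    (hx : |x| ≤ R + 2) (hW : |wronskian p p' q q' x| < (phaseBound R Λ)⁻¹ ^ 2) :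
    phaseInner p p' q q' x ≠ 0 := by
  intro hI
  have hphase : (phaseBound R Λ)⁻¹ ^ 2 * (phaseBound R Λ)⁻¹ ^ 2 ≤ wronskian p p' q q' x ^ 2 := by
    have hlagrange := phaseInner_sq_add_wronskian_sq (p := p) (p' := p') (q := q) (q' := q') x
    rw [hI, zero_pow two_ne_zero, zero_add] at hlagrange
    rw [hlagrange]
    exact mul_le_mul (hp.inv_sq_le_sq_add_sq hx) (hq.inv_sq_le_sq_add_sq hx) (by positivity)
      (by positivity)
  rw [← sq, sq_le_sq, abs_of_nonneg (by positivity)] at hphase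
  exact hphase.not_gt hW

lemma mul_pos_of_phaseInner_pos (hp : IsBoundState R Λ Q₁ p p') (hq : IsBoundState R Λ Q₂ q q')
    (hI : 0 < phaseInner p p' q q' R) : ∀ x ≥ R, 0 < p x * q x := by
  have hne : ∀ x ∈ Set.Ici R, p x * q x ≠ 0 := fun x hx => by
    have hRx : R ≤ |x| := (Set.mem_Ici.1 hx).trans (le_abs_self x)
    exact mul_ne_zero (fun h => (hp.abs_lt_of_eq_zero h).not_ge hRx)
      fun h => (hq.abs_lt_of_eq_zero h).not_ge hRx
  have hR : 0 < p R * q R := by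
    refine (hne R Set.self_mem_Ici).symm.lt_of_le (not_lt.1 fun hneg => ?_)
    have hp' := hp.mul_deriv_nonpos fun x hx =>
      zero_le_one.trans (hp.one_le_potential_of_le le_rfl x hx)
    have hq' := hq.mul_deriv_nonpos fun x hx =>
      zero_le_one.trans (hq.one_le_potential_of_le le_rfl x hx)
    have hderiv : 0 < p' R * q' R := by
      simp only [phaseInner] at hI
      linarith
    nlinarith [mul_nonneg_of_nonpos_of_nonpos hp' hq', mul_neg_of_neg_of_pos hneg hderiv]
  exact forall_pos_of_forall_ne_zero isPreconnected_Ici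
    (hp.continuous.mul hq.continuous).continuousOn hne Set.self_mem_Ici hR

end IsBoundState

end Wronskian

section Gap

variable {R δ : ℝ} {Λ Q p p' q q' : ℝ → ℝ}

namespace IsBoundState

lemma abs_wronskian_le_of_add_const (hp : IsBoundState R Λ Q p p')
    (hq : IsBoundState R Λ (fun x => Q x + δ) q q') (hδ : 0 ≤ δ) (x : ℝ) :
    |wronskian p p' q q' x| ≤ δ * phaseBound R Λ ^ 2 :=
  hp.abs_wronskian_le hq (fun y => by
    rw [add_sub_cancel_left, abs_of_nonneg hδ]
    exact le_mul_of_one_le_right hδ (le_add_of_nonneg_right (abs_nonneg y))) x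

lemma hasDerivAt_wronskian_of_add_const (hp : IsBoundState R Λ Q p p')
    (hq : IsBoundState R Λ (fun x => Q x + δ) q q') (x : ℝ) :
    HasDerivAt (wronskian p p' q q') (δ * (p x * q x)) x := by
  simpa using hp.hasDerivAt_wronskian hq.toIsSolution x

lemma wronskian_le_of_phaseInner_pos (hp : IsBoundState R Λ Q p p')
    (hq : IsBoundState R Λ (fun x => Q x + δ) q q') (hδ : 0 ≤ δ)
    (hI : 0 < phaseInner p p' q q' R) :
    wronskian p p' q q' R ≤ -(δ * (4 * phaseBound R Λ)⁻¹ ^ 2) := by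
  have hK := phaseBound_pos R Λ
  have hpos := hp.mul_pos_of_phaseInner_pos hq hI
  have hderiv := hp.hasDerivAt_wronskian_of_add_const hq
  have hend : wronskian p p' q q' (R + 1) ≤ 0 :=
    nonpos_of_hasDerivAt_nonneg_of_tendsto_zero (fun x _ => hderiv x)
      (fun x hx => mul_nonneg hδ (hpos x (by linarith)).le) (hp.tendsto_wronskian hq)
  have hstart := mul_sub_le_image_sub_of_le_hasDerivAt (c := δ * (4 * phaseBound R Λ)⁻¹ ^ 2)
    (lt_add_one R).le (fun x _ => hderiv x) fun x hx => by
      refine mul_le_mul_of_nonneg_left ?_ hδ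
      rw [← abs_of_pos (hpos x hx.1), abs_mul, sq]
      exact mul_le_mul (hp.inv_le_abs hx) (hq.inv_le_abs hx) (by positivity) (abs_nonneg _)
  linarith

lemma phaseInner_ne_zero_of_add_const (hp : IsBoundState R Λ Q p p')
    (hq : IsBoundState R Λ (fun x => Q x + δ) q q') (hδ : 0 ≤ δ)
    (hsmall : δ * phaseBound R Λ ^ 4 < 1) {x : ℝ} (hx : |x| ≤ R + 2) :
    phaseInner p p' q q' x ≠ 0 := by
  refine hp.phaseInner_ne_zero hq hx ((hp.abs_wronskian_le_of_add_const hq hδ x).trans_lt ?_)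
  rw [inv_pow, ← one_div, lt_div_iff₀ (pow_pos (phaseBound_pos R Λ) 2)]
  linarith

lemma phaseInner_pos_of_add_const (hp : IsBoundState R Λ Q p p')
    (hq : IsBoundState R Λ (fun x => Q x + δ) q q') (hδ : 0 ≤ δ)
    (hsmall : δ * phaseBound R Λ ^ 4 < 1) (hI : 0 < phaseInner p p' q q' 0) :
    ∀ x ∈ Set.Icc (-R) R, 0 < phaseInner p p' q q' x := by
  have hR := hp.radius_pos
  have hcont : Continuous (phaseInner p p' q q') :=
    (hp.continuous.mul hq.continuous).add (hp.continuous_deriv.mul hq.continuous_deriv)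
  exact forall_pos_of_forall_ne_zero isPreconnected_Icc hcont.continuousOn
    (fun x hx => hp.phaseInner_ne_zero_of_add_const hq hδ hsmall
      ((abs_le.2 hx).trans (by linarith)))
    ⟨by linarith, hR.le⟩ hI

lemma one_le_of_phaseInner_pos (hp : IsBoundState R Λ Q p p')
    (hq : IsBoundState R Λ (fun x => Q x + δ) q q') (hδ : 0 < δ)
    (hsmall : δ * phaseBound R Λ ^ 4 < 1) (hI : 0 < phaseInner p p' q q' 0) :
    1 ≤ 16 * R * phaseBound R Λ ^ 4 * δ := by
  have hR := hp.radius_pos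
  have hK := phaseBound_pos R Λ
  have hIpos := hp.phaseInner_pos_of_add_const hq hδ.le hsmall hI
  have hright := hp.wronskian_le_of_phaseInner_pos hq hδ.le (hIpos R ⟨by linarith, le_rfl⟩)
  have hleft := hp.comp_neg.wronskian_le_of_phaseInner_pos hq.comp_neg hδ.le
    (by simpa [phaseInner] using hIpos (-R) ⟨le_rfl, by linarith⟩)
  rw [wronskian_comp_neg] at hleft
  have hmiddle := mul_sub_le_image_sub_of_le_hasDerivAt (c := -(δ * (δ * phaseBound R Λ ^ 2)))
    (by linarith : -R ≤ R) (fun x _ => hp.hasDerivAt_wronskian_of_add_const hq x) fun x hx => by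
      have hpq := neg_abs_wronskian_le_mul (hIpos x hx)
      rw [← mul_neg]
      exact mul_le_mul_of_nonneg_left (by linarith [hp.abs_wronskian_le_of_add_const hq hδ.le x])
        hδ.le
  have hcombined : δ * (4 * phaseBound R Λ)⁻¹ ^ 2 ≤ δ * (R * δ * phaseBound R Λ ^ 2) := by
    linarith
  rw [mul_le_mul_iff_right₀ hδ, inv_pow, inv_le_iff_one_le_mul₀ (by positivity)] at hcombined
  linarith

lemma inv_le_of_add_const (hp : IsBoundState R Λ Q p p')
    (hq : IsBoundState R Λ (fun x => Q x + δ) q q') (hδ : 0 < δ) :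
    ((16 * R + 1) * phaseBound R Λ ^ 4)⁻¹ ≤ δ := by
  have hR := hp.radius_pos
  have hK := phaseBound_pos R Λ
  rw [inv_le_iff_one_le_mul₀ (by positivity)]
  rcases le_or_gt 1 (δ * phaseBound R Λ ^ 4) with hlarge | hsmall
  · nlinarith
  suffices 1 ≤ 16 * R * phaseBound R Λ ^ 4 * δ by nlinarith [pow_pos hK 4]
  have hI : phaseInner p p' q q' 0 ≠ 0 :=
    hp.phaseInner_ne_zero_of_add_const hq hδ.le hsmall (by rw [abs_zero]; positivity)
  rcases hI.lt_or_gt with hneg | hpos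
  · refine hp.one_le_of_phaseInner_pos hq.neg hδ hsmall ?_
    simp only [phaseInner] at *
    linarith
  · exact hp.one_le_of_phaseInner_pos hq hδ hsmall hpos

end IsBoundState

end Gap

section Zeros

variable {R ε : ℝ} {Λ Q Q₁ Q₂ p p' q q' : ℝ → ℝ}

/-- A distance over which the derivative of a bound state confined by `R` and `Λ` changes by at most
`1 / (4 * phaseBound R Λ)`, so that each interval of this radius around a zero is free of further
zeros, and the zero persists in it under small perturbations. -/
noncomputable def zeroRadius (R : ℝ) (Λ : ℝ → ℝ) : ℝ :=
  1 / (4 * (Λ (R + 2) * phaseBound R Λ ^ 2 + 1))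

lemma IsConfining.zeroRadius_pos (h : IsConfining R Λ Q) : 0 < zeroRadius R Λ := by
  have hR := h.radius_pos
  have hΛ := h.bound_nonneg (L := R + 2) (by positivity)
  exact one_div_pos.2 (by positivity)

lemma IsConfining.zeroRadius_le (h : IsConfining R Λ Q) : zeroRadius R Λ ≤ 1 / 4 := by
  have hR := h.radius_pos
  have hΛ := h.bound_nonneg (L := R + 2) (by positivity)
  exact one_div_le_one_div_of_le (by norm_num) (by nlinarith [sq_nonneg (phaseBound R Λ)])

lemma IsConfining.mul_zeroRadius_le (h : IsConfining R Λ Q) :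
    Λ (R + 2) * phaseBound R Λ * zeroRadius R Λ ≤ (4 * phaseBound R Λ)⁻¹ := by
  have hR := h.radius_pos
  have hΛ := h.bound_nonneg (L := R + 2) (by positivity)
  have hK := phaseBound_pos R Λ
  rw [zeroRadius, mul_one_div, ← one_div, div_le_div_iff₀ (by positivity) (by positivity)]
  nlinarith

namespace IsBoundState

lemma abs_deriv_sub_le (h : IsBoundState R Λ Q p p') {x z : ℝ} (hz : |z| ≤ R)
    (hx : |x - z| ≤ zeroRadius R Λ) : |p' x - p' z| ≤ (4 * phaseBound R Λ)⁻¹ := by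
  have hR := h.radius_pos
  have hΛ := h.bound_nonneg (L := R + 2) (by positivity)
  have hx' : |x| ≤ R + 2 := by
    linarith [abs_sub_abs_le_abs_sub x z, h.zeroRadius_le]
  have hbound : ∀ y ∈ Set.uIcc z x, ‖Q y * p y‖ ≤ Λ (R + 2) * phaseBound R Λ := fun y hy => by
    rw [Real.norm_eq_abs, abs_mul]
    exact mul_le_mul (h.abs_potential_le_of_mem_uIcc (hz.trans (by linarith)) hx' y hy)
      (h.abs_le_phaseBound y) (abs_nonneg _) hΛ
  have hmean := (convex_uIcc z x).norm_image_sub_le_of_norm_hasDerivWithin_le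
    (fun y _ => (h.hasDerivAt_deriv y).hasDerivWithinAt) hbound Set.left_mem_uIcc Set.right_mem_uIcc
  have hK := phaseBound_pos R Λ
  calc |p' x - p' z| ≤ Λ (R + 2) * phaseBound R Λ * |x - z| := hmean
    _ ≤ Λ (R + 2) * phaseBound R Λ * zeroRadius R Λ := by gcongr
    _ ≤ (4 * phaseBound R Λ)⁻¹ := h.mul_zeroRadius_le

lemma inv_le_abs_deriv_of_eq_zero (h : IsBoundState R Λ Q p p') {z : ℝ} (hz : p z = 0) :
    (phaseBound R Λ)⁻¹ ≤ |p' z| := by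
  have hphase := h.inv_sq_le_sq_add_sq (x := z) (by linarith [h.abs_lt_of_eq_zero hz])
  rw [hz, zero_pow two_ne_zero, zero_add] at hphase
  simpa [abs_of_pos (phaseBound_pos R Λ)] using sq_le_sq.1 hphase

lemma two_mul_zeroRadius_lt_sub (h : IsBoundState R Λ Q p p') {y z : ℝ} (hy : p y = 0)
    (hz : p z = 0) (hlt : y < z) : 2 * zeroRadius R Λ < z - y := by
  obtain ⟨c, hc, hc'⟩ := exists_hasDerivAt_eq_zero hlt h.continuous.continuousOn (hy.trans hz.symm)
    fun x _ => h.hasDerivAt x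
  have hfar {w : ℝ} (hw : p w = 0) : zeroRadius R Λ < |c - w| := by
    by_contra! hnear
    have hclose := h.abs_deriv_sub_le (h.abs_lt_of_eq_zero hw).le hnear
    have hlarge := h.inv_le_abs_deriv_of_eq_zero hw
    rw [hc', zero_sub, abs_neg, mul_inv] at hclose
    linarith [inv_pos.2 (phaseBound_pos R Λ)]
  have hcy := hfar hy
  have hcz := hfar hz
  rw [abs_of_pos (sub_pos.2 hc.1)] at hcy
  rw [abs_of_neg (sub_neg.2 hc.2)] at hcz
  linarith

lemma finite_zeros (h : IsBoundState R Λ Q p p') : (p ⁻¹' {0}).Finite :=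
  finite_zeros_of_subset_isCompact (isCompact_closedBall 0 R) h.hasDerivAt
    (fun _ hx => mem_closedBall_zero_iff.2 (h.abs_lt_of_eq_zero hx).le) fun _ => h.deriv_ne_zero

lemma exists_zero_near (h : IsBoundState R Λ Q p p') {z : ℝ} (hz : |z| ≤ R)
    (hsmall : |p z| < (4 * phaseBound R Λ)⁻¹ * zeroRadius R Λ)
    (hsteep : 2 * (4 * phaseBound R Λ)⁻¹ ≤ |p' z|) :
    ∃ y, |y - z| < zeroRadius R Λ ∧ p y = 0 := by
  wlog hpos : 0 ≤ p' z generalizing p p'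
  · simpa using this h.neg (by simpa using hsmall) (by simpa using hsteep) (by linarith)
  rw [abs_of_nonneg hpos] at hsteep
  have hderiv : ∀ x ∈ Set.Icc (z - zeroRadius R Λ) (z + zeroRadius R Λ),
      (4 * phaseBound R Λ)⁻¹ ≤ p' x := fun x hx => by
    have hclose := h.abs_deriv_sub_le (x := x) hz
      (abs_le.2 ⟨by linarith [hx.1], by linarith [hx.2]⟩)
    linarith [(abs_le.1 hclose).1]
  obtain ⟨y, hy, hy₀⟩ :=
    exists_eq_zero_of_le_deriv h.zeroRadius_pos (fun x _ => h.hasDerivAt x) hderiv hsmall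
  exact ⟨y, abs_lt.2 ⟨by linarith [hy.1], by linarith [hy.2]⟩, hy₀⟩

lemma exists_zero_near_zero (hp : IsBoundState R Λ Q₁ p p') (hq : IsBoundState R Λ Q₂ q q')
    (hε : ∀ x, |Q₂ x - Q₁ x| ≤ ε * (1 + |x|))
    (hsmall : 4 * ε * phaseBound R Λ ^ 4 < zeroRadius R Λ) {z : ℝ} (hz : p z = 0) :
    ∃ y, |y - z| < zeroRadius R Λ ∧ q y = 0 := by
  have hK := phaseBound_pos R Λ
  have hzR := (hp.abs_lt_of_eq_zero hz).le
  -- At a zero of `p` the Wronskian is `-p' q`, so it controls `q`.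
  have hqz : |q z| < (4 * phaseBound R Λ)⁻¹ * zeroRadius R Λ := by
    have hW := hp.abs_wronskian_le hq hε z
    rw [wronskian, hz, zero_mul, zero_sub, abs_neg, abs_mul] at hW
    have hinv : (phaseBound R Λ)⁻¹ * |q z| ≤ ε * phaseBound R Λ ^ 2 :=
      (mul_le_mul_of_nonneg_right (hp.inv_le_abs_deriv_of_eq_zero hz) (abs_nonneg _)).trans hW
    rw [inv_mul_le_iff₀ hK] at hinv
    rw [lt_inv_mul_iff₀ (by positivity)]
    nlinarith
  have hqz' : |q z| ≤ (4 * phaseBound R Λ)⁻¹ :=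
    hqz.le.trans (mul_le_of_le_one_right (by positivity) (hq.zeroRadius_le.trans (by norm_num)))
  refine hq.exists_zero_near hzR hqz ?_
  have hphase := hq.inv_sq_le_sq_add_sq (x := z) (by linarith)
  rw [← sq_abs (q z), ← sq_abs (q' z)] at hphase
  rw [mul_inv] at hqz' ⊢
  by_contra! hflat
  nlinarith [inv_pos.2 hK, abs_nonneg (q z), abs_nonneg (q' z)]

lemma encard_zeros_le (hp : IsBoundState R Λ Q₁ p p') (hq : IsBoundState R Λ Q₂ q q')
    (hε : ∀ x, |Q₂ x - Q₁ x| ≤ ε * (1 + |x|))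
    (hsmall : 4 * ε * phaseBound R Λ ^ 4 < zeroRadius R Λ) :
    (p ⁻¹' {0}).encard ≤ (q ⁻¹' {0}).encard := by
  choose! near hnear hzero using fun z (hz : z ∈ p ⁻¹' {0}) =>
    hp.exists_zero_near_zero hq hε hsmall hz
  refine Set.encard_le_encard_of_injOn hzero fun y hy z hz heq => ?_
  wlog hyz : y < z generalizing y z
  · exact (not_lt.1 hyz).eq_or_lt.elim Eq.symm fun hzy => (this z hz y hy heq.symm hzy).symm
  have hsep := hp.two_mul_zeroRadius_lt_sub hy hz hyz
  have hy' := abs_lt.1 (hnear y hy)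
  have hz' := abs_lt.1 (hnear z hz)
  rw [heq] at hy'
  linarith [hy'.2, hz'.1]

lemma encard_zeros_eq (hp : IsBoundState R Λ Q₁ p p') (hq : IsBoundState R Λ Q₂ q q')
    (hε : ∀ x, |Q₂ x - Q₁ x| ≤ ε * (1 + |x|))
    (hsmall : 4 * ε * phaseBound R Λ ^ 4 < zeroRadius R Λ) :
    (p ⁻¹' {0}).encard = (q ⁻¹' {0}).encard :=
  (hp.encard_zeros_le hq hε hsmall).antisymm
    (hq.encard_zeros_le hp (fun x => by rw [abs_sub_comm]; exact hε x) hsmall)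

end IsBoundState

end Zeros

section Fibers

variable {B C R k E : ℝ} {Λ V Q p p' w : ℝ → ℝ}

/-- The potential `(B x - k)² + V - E` for which the eigenvalue equation of the fiber operator at
energy `E` reads `φ'' = fiberPotential B V k E * φ`. -/
def fiberPotential (B : ℝ) (V : ℝ → ℝ) (k E x : ℝ) : ℝ := (B * x - k) ^ 2 + V x - E

lemma abs_fiberPotential_sub_le (k₁ k₂ E₁ E₂ x : ℝ) :
    |fiberPotential B V k₂ E₂ x - fiberPotential B V k₁ E₁ x| ≤
      (|k₁ - k₂| * (2 * |B| + |k₁| + |k₂|) + |E₁ - E₂|) * (1 + |x|) := by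
  have hsum : |2 * (B * x) - k₁ - k₂| ≤ 2 * (|B| * |x|) + |k₁| + |k₂| := by
    refine (abs_sub _ _).trans (add_le_add_left ((abs_sub _ _).trans_eq ?_) _)
    rw [abs_mul, abs_mul, abs_two]
  calc |fiberPotential B V k₂ E₂ x - fiberPotential B V k₁ E₁ x|
      = |(k₁ - k₂) * (2 * (B * x) - k₁ - k₂) + (E₁ - E₂)| := by
        simp only [fiberPotential]
        ring_nf
    _ ≤ |k₁ - k₂| * (2 * (|B| * |x|) + |k₁| + |k₂|) + |E₁ - E₂| := by
        refine (abs_add_le _ _).trans ?_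
        rw [abs_mul]
        gcongr
    _ ≤ (|k₁ - k₂| * (2 * |B| + |k₁| + |k₂|) + |E₁ - E₂|) * (1 + |x|) := by
        have hslack : 0 ≤ |k₁ - k₂| * (2 * |B| + (|k₁| + |k₂|) * |x|) + |E₁ - E₂| * |x| := by
          positivity
        linarith

lemma exists_isConfining_fiberPotential (hB : B ≠ 0) (C N M : ℝ) :
    ∃ R Λ, ∀ V k E, (∀ x, |V x| ≤ C) → |k| ≤ N → |E| ≤ M →
      IsConfining R Λ (fiberPotential B V k E) := by
  refine ⟨(N + C + M + 1) / |B|, fun L => (|B| * L + N) ^ 2 + C + M, fun V k E hV hk hE => ?_⟩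
  have hC : 0 ≤ C := (abs_nonneg _).trans (hV 0)
  have hN : 0 ≤ N := (abs_nonneg _).trans hk
  have hM : 0 ≤ M := (abs_nonneg _).trans hE
  refine ⟨by positivity, fun L x hx => ?_, fun x hx => ?_⟩
  · have hlin : |B * x - k| ≤ |B| * L + N := by
      refine (abs_sub _ _).trans (add_le_add ?_ hk)
      rw [abs_mul]
      gcongr
    calc |fiberPotential B V k E x| ≤ |B * x - k| ^ 2 + |V x| + |E| := by
          rw [← abs_pow]
          exact (abs_sub _ _).trans (add_le_add_left (abs_add_le _ _) _)
      _ ≤ (|B| * L + N) ^ 2 + C + M := by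
          gcongr
          exact hV x
  · have hlin : C + M + 1 ≤ |B * x - k| := by
      have htri := abs_sub_abs_le_abs_sub (B * x) k
      rw [div_le_iff₀ (abs_pos.2 hB)] at hx
      rw [abs_mul] at htri
      linarith
    simp only [fiberPotential]
    rw [← sq_abs (B * x - k)]
    nlinarith [(abs_le.1 (hV x)).1, (abs_le.1 hE).2]

lemma IsL2Solution.exists_isBoundState (h : IsL2Solution Q p p') (hQ : IsConfining R Λ Q)
    (hne : p ≠ 0) :
    ∃ a, IsBoundState R Λ Q (fun x => a * p x) (fun x => a * p' x) := by
  have hinit : 0 < p 0 ^ 2 + p' 0 ^ 2 := by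
    refine (by positivity : 0 ≤ p 0 ^ 2 + p' 0 ^ 2).lt_of_ne fun h0 => hne ?_
    funext x
    have hgrowth := h.toIsSolution.sq_add_sq_le (a := 0) (b := x)
      (hQ.abs_potential_le_of_mem_uIcc (by simp) le_rfl)
    rw [← h0, zero_mul] at hgrowth
    exact pow_eq_zero_iff two_ne_zero |>.1 (by nlinarith [sq_nonneg (p x), sq_nonneg (p' x)])
  refine ⟨(√(p 0 ^ 2 + p' 0 ^ 2))⁻¹, h.const_mul _, hQ, ?_⟩
  rw [mul_pow, mul_pow, ← mul_add, inv_pow, Real.sq_sqrt hinit.le, inv_mul_cancel₀ hinit.ne']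

namespace IsEigenvalue

lemma exists_isL2Solution (h : IsEigenvalue B V k E) :
    ∃ φ φ', IsL2Solution (fiberPotential B V k E) φ φ' ∧ φ ≠ 0 := by
  obtain ⟨φ, hφ, hne, hint, heq⟩ := h
  have hφ' : Differentiable ℝ (deriv φ) :=
    (contDiff_succ_iff_deriv.1 (one_add_one_eq_two (R := WithTop ℕ∞) ▸ hφ)).2.2.differentiable
      one_ne_zero
  refine ⟨φ, deriv φ, ⟨⟨fun x => (hφ.differentiable two_ne_zero x).hasDerivAt, fun x => ?_⟩, hint⟩,
    hne⟩
  refine (hφ' x).hasDerivAt.congr_deriv ?_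
  rw [fiberPotential]
  linarith [heq x]

lemma exists_isBoundState (h : IsEigenvalue B V k E)
    (hQ : IsConfining R Λ (fiberPotential B V k E)) :
    ∃ φ φ', IsBoundState R Λ (fiberPotential B V k E) φ φ' := by
  obtain ⟨φ, φ', hφ, hne⟩ := h.exists_isL2Solution
  obtain ⟨a, ha⟩ := hφ.exists_isBoundState hQ hne
  exact ⟨_, _, ha⟩

lemma recenter (hB : B ≠ 0) (h : IsEigenvalue B V k E) :
    IsEigenvalue B (fun x => V (x + k / B)) 0 E := by
  obtain ⟨φ, hφ, hne, hint, heq⟩ := h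
  refine ⟨fun x => φ (x + k / B), hφ.comp (contDiff_id.add contDiff_const), fun h0 => hne ?_,
    hint.comp_add_right (k / B), fun x => ?_⟩
  · funext x
    simpa using congrFun h0 (x - k / B)
  · have hderiv : deriv (fun x => φ (x + k / B)) = fun x => deriv φ (x + k / B) :=
      funext fun x => deriv_comp_add_const φ (k / B) x
    have hcenter : B * (x + k / B) - k = B * x - 0 := by field_simp; ring
    rw [hderiv, deriv_comp_add_const, ← hcenter]
    exact heq (x + k / B)

lemma neg_add_one_le (hV : ∀ x, |V x| ≤ C) (h : IsEigenvalue B V k E) : -(C + 1) ≤ E := by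
  by_contra! hE
  obtain ⟨φ, φ', hφ, hne⟩ := h.exists_isL2Solution
  refine hne (hφ.eq_zero_of_one_le fun x => ?_)
  rw [fiberPotential]
  linarith [(abs_le.1 (hV x)).1, sq_nonneg (B * x - k)]

lemma inv_le_sub {E₁ E₂ : ℝ} (h₁ : IsEigenvalue B V k E₁) (h₂ : IsEigenvalue B V k E₂)
    (hQ₁ : IsConfining R Λ (fiberPotential B V k E₁))
    (hQ₂ : IsConfining R Λ (fiberPotential B V k E₂)) (hlt : E₁ < E₂) :
    ((16 * R + 1) * phaseBound R Λ ^ 4)⁻¹ ≤ E₂ - E₁ := by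
  obtain ⟨φ₁, φ₁', hφ₁⟩ := h₁.exists_isBoundState hQ₁
  obtain ⟨φ₂, φ₂', hφ₂⟩ := h₂.exists_isBoundState hQ₂
  have hQ : fiberPotential B V k E₁ = fun x => fiberPotential B V k E₂ x + (E₂ - E₁) := by
    funext x
    simp only [fiberPotential]
    ring
  rw [hQ] at hφ₁
  exact hφ₂.inv_le_of_add_const hφ₁ (sub_pos.2 hlt)

end IsEigenvalue

lemma IsSolution.le_encard_zeros (h : IsSolution Q p p') {c : ℝ} {n : ℕ}
    (hQ : ∀ x ∈ Set.Icc c (c + 2 * n), Q x ≤ -Real.pi ^ 2) : (n : ℕ∞) ≤ (p ⁻¹' {0}).encard := by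
  have hzero : ∀ i < n, ∃ z ∈ Set.Icc (c + 2 * i) (c + 2 * i + 1), p z = 0 := fun i hi => by
    refine h.exists_eq_zero_of_le (lt_add_one _) fun x hx => ?_
    rw [add_sub_cancel_left, div_one]
    have hi' : (i : ℝ) + 1 ≤ n := by exact_mod_cast hi
    exact hQ x ⟨by linarith [hx.1], by linarith [hx.2]⟩
  choose! z hz hpz using hzero
  have hle {i j : ℕ} (hi : i < n) (hj : j < n) (heq : z i = z j) : i ≤ j := by
    have hlt : (i : ℝ) < j + 1 := by linarith [(hz i hi).1, (hz j hj).2]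
    exact Nat.lt_succ_iff.1 (by exact_mod_cast hlt)
  have hcard : (Set.Iio n).encard = n := by
    rw [← Finset.coe_Iio, Set.encard_coe_eq_coe_finsetCard, Nat.card_Iio]
  rw [← hcard]
  exact Set.encard_le_encard_of_injOn hpz fun i hi j hj heq =>
    (hle hi hj heq).antisymm (hle hj hi heq.symm)

lemma IsSolution.le_encard_zeros_of_le_energy (hB : B ≠ 0) (hV : ∀ x, V x ≤ C)
    (h : IsSolution (fiberPotential B V k E) p p') {n : ℕ}
    (hE : Real.pi ^ 2 + (B * (2 * n)) ^ 2 + C ≤ E) : (n : ℕ∞) ≤ (p ⁻¹' {0}).encard := by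
  refine h.le_encard_zeros (c := k / B) fun x hx => ?_
  have hcenter : B * x - k = B * (x - k / B) := by field_simp
  have hsq : (B * x - k) ^ 2 ≤ (B * (2 * n)) ^ 2 := by
    rw [hcenter, mul_pow, mul_pow]
    gcongr
    exacts [sub_nonneg.2 hx.1, by linarith [hx.2]]
  rw [fiberPotential]
  linarith [hV x]

end Fibers

section Branches

variable {B C : ℝ} {V w : ℝ → ℝ}

lemma isLocallyConstant_encard_zeros (hB : B ≠ 0) (hV : ∀ x, |V x| ≤ C) (hw : Continuous w)
    {R : ℝ → ℝ} {Λ φ φ' : ℝ → ℝ → ℝ}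
    (hφ : ∀ k, IsBoundState (R k) (Λ k) (fiberPotential B V k (w k)) (φ k) (φ' k)) :
    IsLocallyConstant fun k => (φ k ⁻¹' {0}).encard := by
  refine (IsLocallyConstant.iff_eventually_eq _).2 fun k₀ => ?_
  obtain ⟨R₀, Λ₀, hconf⟩ := exists_isConfining_fiberPotential hB C (|k₀| + 1) (|w k₀| + 1)
  have hstate : ∀ k, |k| ≤ |k₀| + 1 → |w k| ≤ |w k₀| + 1 →
      IsBoundState R₀ Λ₀ (fiberPotential B V k (w k)) (φ k) (φ' k) := fun k hk hwk =>
    ⟨(hφ k).toIsL2Solution, hconf V k (w k) hV hk hwk, (hφ k).normalized⟩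
  have hstate₀ := hstate k₀ (lt_add_one _).le (lt_add_one _).le
  set ε : ℝ → ℝ := fun k => |k - k₀| * (2 * |B| + |k| + |k₀|) + |w k - w k₀| with hε
  have hε_small : ∀ᶠ k in nhds k₀, 4 * ε k * phaseBound R₀ Λ₀ ^ 4 < zeroRadius R₀ Λ₀ :=
    ContinuousAt.eventually_lt (by fun_prop) continuousAt_const
      (by simpa [hε] using hstate₀.zeroRadius_pos)
  filter_upwards [hε_small, continuous_abs.continuousAt.eventually_lt_const (lt_add_one |k₀|),
    hw.abs.continuousAt.eventually_lt_const (lt_add_one |w k₀|)] with k hsmall hk hwk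
  exact (hstate k hk.le hwk.le).encard_zeros_eq hstate₀
    (abs_fiberPotential_sub_le k k₀ (w k) (w k₀)) hsmall

lemma bddAbove_range_of_isEigenvalue (hB : B ≠ 0) (hV : ∀ x, |V x| ≤ C) (hw : Continuous w)
    (heig : ∀ k, IsEigenvalue B V k (w k)) : BddAbove (Set.range w) := by
  choose R Λ hconf using fun k => exists_isConfining_fiberPotential hB C |k| |w k|
  choose φ φ' hφ using fun k =>
    (heig k).exists_isBoundState (hconf k V k (w k) hV le_rfl le_rfl)
  obtain ⟨n, hn⟩ : ∃ n : ℕ, (φ 0 ⁻¹' {0}).encard = n :=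
    ENat.ne_top_iff_exists.1 (Set.encard_ne_top_iff.2 (hφ 0).finite_zeros) |>.imp fun _ => Eq.symm
  refine ⟨Real.pi ^ 2 + (B * (2 * (n + 1 : ℕ))) ^ 2 + C, Set.forall_mem_range.2 fun k => ?_⟩
  by_contra! hlarge
  have hmany := (hφ k).toIsSolution.le_encard_zeros_of_le_energy hB
    (fun x => (le_abs_self _).trans (hV x)) hlarge.le
  have hconst := (isLocallyConstant_encard_zeros hB hV hw hφ).apply_eq_of_preconnectedSpace k 0
  rw [hconst, hn, Nat.cast_le] at hmany
  exact n.lt_irrefl hmany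

end Branches

theorem dispersion_curves_uniformly_separated_general {B C : ℝ} (hB : B ≠ 0) {V : ℝ → ℝ}
    (hV : ∀ x, |V x| ≤ C) {w₁ w₂ : ℝ → ℝ} (hw₂ : Continuous w₂) (hlt : ∀ k, w₁ k < w₂ k)
    (h₁ : ∀ k, IsEigenvalue B V k (w₁ k)) (h₂ : ∀ k, IsEigenvalue B V k (w₂ k)) :
    ∃ d > 0, ∀ k, d ≤ w₂ k - w₁ k := by
  obtain ⟨M, hM⟩ := bddAbove_range_of_isEigenvalue hB hV hw₂ h₂
  have hw₂M (k : ℝ) : w₂ k ≤ M := hM (Set.mem_range_self k)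
  have habs {k E : ℝ} (hE : IsEigenvalue B V k E) (hEM : E ≤ M) : |E| ≤ max (C + 1) M :=
    abs_le.2 ⟨(neg_le_neg (le_max_left _ _)).trans (hE.neg_add_one_le hV), le_max_of_le_right hEM⟩
  obtain ⟨R, Λ, hconf⟩ := exists_isConfining_fiberPotential hB C 0 (max (C + 1) M)
  have hR : 0 < R := (hconf V 0 (w₂ 0) hV abs_zero.le (habs (h₂ 0) (hw₂M 0))).radius_pos
  have hK := phaseBound_pos R Λ
  refine ⟨((16 * R + 1) * phaseBound R Λ ^ 4)⁻¹, by positivity, fun k => ?_⟩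
  have hconf_recenter {E : ℝ} (hE : IsEigenvalue B V k E) (hEM : E ≤ M) :
      IsConfining R Λ (fiberPotential B (fun x => V (x + k / B)) 0 E) :=
    hconf _ 0 E (fun _ => hV _) abs_zero.le (habs hE hEM)
  exact ((h₁ k).recenter hB).inv_le_sub ((h₂ k).recenter hB)
    (hconf_recenter (h₁ k) ((hlt k).le.trans (hw₂M k))) (hconf_recenter (h₂ k) (hw₂M k)) (hlt k)

/-- If `0 ≤ V₀ ≤ C` with `V₀(x) → C` as `|x| → ∞`, `0 < C < ∞`, then consecutive
dispersion curves of `h₀(k)` are uniformly separated: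
`inf_{k ∈ ℝ} (ω_{j+1}(k) - ω_j(k)) > 0`. -/
theorem dispersion_curves_uniformly_separated (B C : ℝ) (hB : 0 < B) (hC : 0 < C)
    (V₀ : ℝ → ℝ)
    (hVbdd : ∀ x, 0 ≤ V₀ x ∧ V₀ x ≤ C)
    (hVlim : Tendsto V₀ (cocompact ℝ) (nhds C))
    (ω : ℕ → ℝ → ℝ)
    (hcont : ∀ j, Continuous (ω j))
    (hmono : ∀ k, StrictMono (fun j => ω j k))
    (heig : ∀ j k, IsEigenvalue B V₀ k (ω j k))
    (hexh : ∀ k e, IsEigenvalue B V₀ k e → ∃ j, e = ω j k)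
    (j : ℕ) :
    ∃ d > 0, ∀ k : ℝ, d ≤ ω (j + 1) k - ω j k := by
  exact dispersion_curves_uniformly_separated_general hB.ne'
    (fun x => abs_le.2 ⟨by linarith [(hVbdd x).1], (hVbdd x).2⟩) (hcont (j + 1))
    (fun k => hmono k j.lt_succ_self) (heig j) (heig (j + 1))
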